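/- Let 0 < α < 1 and μ ∈ ℝ, and define F_{α,δ}(z) = ∑_{j=0}^∞ (j+1) z^j / Γ(α j + δ) for δ > 0. Then for every t > 0: (i) the function φ(t) = t^α F_{α,α+1}(-μ t^α) satisfies (D^α φ)(t) + μ φ(t) = E_{α,1}(-μ t^α); (ii) the function ψ(t) = t^{2α} F_{α,2α+1}(-μ t^α) satisfies (D^α ψ)(t) + μ ψ(t) = t^α E_{α,α+1}(-μ t^α). -/

import Mathlib

open MeasureTheory

/-- The two-parameter Mittag-Leffler function `E_{a,b}(z) = ∑_{k=0}^∞ z^k / Γ(a k + b)`. -/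
noncomputable def mittagLeffler (a b z : ℝ) : ℝ := ∑' k : ℕ, z ^ k / Real.Gamma (a * k + b)

/-- The series `F_{α,δ}(z) = ∑_{j=0}^∞ (j+1) z^j / Γ(α j + δ)`. -/
noncomputable def mlF (α δ z : ℝ) : ℝ := ∑' j : ℕ, (j + 1) * z ^ j / Real.Gamma (α * j + δ)

open Filter Topology Set

lemma Real.rpow_mul_Gamma_le_Gamma_add {a y : ℝ} (ha0 : 0 < a) (ha1 : a < 1) (hy : 1 < y) :
    (y + a - 1) ^ a * Real.Gamma y ≤ Real.Gamma (y + a) := by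
  have hpos : 0 < y + a - 1 := by linarith
  have hG : 0 < Real.Gamma (y + a - 1) := Real.Gamma_pos_of_pos hpos
  have hconv := Real.Gamma_mul_add_mul_le_rpow_Gamma_mul_rpow_Gamma hpos
    (show 0 < y + a by linarith) ha0 (show 0 < 1 - a by linarith) (by ring)
  have hrec : Real.Gamma (y + a) = (y + a - 1) * Real.Gamma (y + a - 1) := by
    rw [← Real.Gamma_add_one hpos.ne']
    ring_nf
  have hG' : 0 < Real.Gamma (y + a) := Real.Gamma_pos_of_pos (by linarith)
  rw [show a * (y + a - 1) + (1 - a) * (y + a) = y by ring] at hconv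
  calc (y + a - 1) ^ a * Real.Gamma y
      ≤ (y + a - 1) ^ a * (Real.Gamma (y + a - 1) ^ a * Real.Gamma (y + a) ^ (1 - a)) := by
        gcongr
    _ = Real.Gamma (y + a) ^ a * Real.Gamma (y + a) ^ (1 - a) := by
        rw [← mul_assoc, ← Real.mul_rpow hpos.le hG.le, ← hrec]
    _ = Real.Gamma (y + a) := by
        rw [← Real.rpow_add hG']
        simp

lemma Real.integral_rpow_mul_sub_rpow {u v a : ℝ} (hu : 0 < u) (hv : 0 < v) (ha : 0 < a) :
    ∫ x in (0 : ℝ)..a, x ^ (u - 1) * (a - x) ^ (v - 1) =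
      a ^ (u + v - 1) * (Real.Gamma u * Real.Gamma v / Real.Gamma (u + v)) := by
  have h := Complex.betaIntegral_scaled (u : ℂ) (v : ℂ) ha
  rw [Complex.betaIntegral_eq_Gamma_mul_div _ _ (by simpa) (by simpa)] at h
  apply Complex.ofReal_injective
  rw [← intervalIntegral.integral_ofReal]
  push_cast [Complex.ofReal_cpow ha.le, ← Complex.Gamma_ofReal]
  rw [← h]
  refine intervalIntegral.integral_congr fun x hx => ?_
  rw [uIcc_of_le ha.le] at hx
  rw [Complex.ofReal_cpow hx.1, Complex.ofReal_cpow (sub_nonneg.2 hx.2)]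
  push_cast
  rfl

lemma Real.intervalIntegrable_rpow_mul_sub_rpow {u v a : ℝ} (hu : 0 < u) (hv : 0 < v)
    (ha : 0 < a) :
    IntervalIntegrable (fun x : ℝ => x ^ (u - 1) * (a - x) ^ (v - 1)) volume 0 a := by
  apply intervalIntegral.intervalIntegrable_of_integral_ne_zero
  rw [Real.integral_rpow_mul_sub_rpow hu hv ha]
  have := Real.Gamma_pos_of_pos hu
  have := Real.Gamma_pos_of_pos hv
  have := Real.Gamma_pos_of_pos (add_pos hu hv)
  positivity

lemma summable_mlF {α δ : ℝ} (hα0 : 0 < α) (hα1 : α < 1) (hδ : 0 < δ) (x : ℝ) :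
    Summable fun j : ℕ => (j + 1) * x ^ j / Real.Gamma (α * j + δ) := by
  apply summable_of_ratio_norm_eventually_le (r := 1 / 2) (by norm_num)
  have hlin : Tendsto (fun n : ℕ => α * n + δ) atTop atTop :=
    tendsto_atTop_add_const_right _ _ (tendsto_natCast_atTop_atTop.const_mul_atTop hα0)
  have hpow : Tendsto (fun n : ℕ => (α * n + δ + α - 1) ^ α) atTop atTop :=
    (tendsto_rpow_atTop hα0).comp (tendsto_atTop_add_const_right _ _
      (tendsto_atTop_add_const_right _ _ hlin))
  filter_upwards [hlin.eventually_gt_atTop 1, hpow.eventually_ge_atTop (4 * |x|)] with n h1 h4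
  have hΓ : 0 < Real.Gamma (α * n + δ) := Real.Gamma_pos_of_pos (by linarith)
  have hΓ' : 0 < Real.Gamma (α * n + δ + α) := Real.Gamma_pos_of_pos (by linarith)
  have key : 4 * |x| * Real.Gamma (α * n + δ) ≤ Real.Gamma (α * n + δ + α) :=
    (mul_le_mul_of_nonneg_right h4 hΓ.le).trans (Real.rpow_mul_Gamma_le_Gamma_add hα0 hα1 h1)
  have hn : |(n : ℝ) + 1| = n + 1 := abs_of_pos (by positivity)
  have hn' : |(n : ℝ) + 1 + 1| = n + 1 + 1 := abs_of_pos (by positivity)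
  rw [show α * ((n + 1 : ℕ) : ℝ) + δ = α * n + δ + α by push_cast; ring]
  simp only [norm_div, norm_mul, norm_pow, Real.norm_eq_abs, abs_of_pos hΓ, abs_of_pos hΓ', hn,
    Nat.cast_add, Nat.cast_one, hn']
  rw [← mul_div_assoc, div_le_div_iff₀ hΓ' hΓ]
  calc ((n : ℝ) + 1 + 1) * |x| ^ (n + 1) * Real.Gamma (α * n + δ)
      ≤ (2 * (n + 1)) * |x| ^ (n + 1) * Real.Gamma (α * n + δ) := by
        gcongr
        linarith [n.cast_nonneg (α := ℝ)]
    _ = 1 / 2 * ((n + 1) * |x| ^ n) * (4 * |x| * Real.Gamma (α * n + δ)) := by ring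
    _ ≤ 1 / 2 * ((n + 1) * |x| ^ n) * Real.Gamma (α * n + δ + α) := by gcongr

lemma mlF_sub_mul_mlF {α δ : ℝ} (hα0 : 0 < α) (hα1 : α < 1) (hδ : 0 < δ) (z : ℝ) :
    mlF α δ z - z * mlF α (α + δ) z = mittagLeffler α δ z := by
  have h1 := summable_mlF hα0 hα1 hδ z
  have h2 := (summable_mlF hα0 hα1 (add_pos hα0 hδ) z).mul_left z
  have h3 : Summable fun j : ℕ => j * z ^ j / Real.Gamma (α * j + δ) := by
    rw [← summable_nat_add_iff 1]
    refine h2.congr fun j => ?_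
    push_cast
    ring_nf
  have h4 : ∑' j : ℕ, j * z ^ j / Real.Gamma (α * j + δ) = z * mlF α (α + δ) z := by
    rw [h3.tsum_eq_zero_add, mlF, ← tsum_mul_left]
    simp only [Nat.cast_zero, zero_mul, zero_div, zero_add]
    refine tsum_congr fun j => ?_
    push_cast
    ring_nf
  rw [← h4, mlF, ← h1.tsum_sub h3, mittagLeffler]
  exact tsum_congr fun j => by ring

lemma rpow_natCast_mul_add {x : ℝ} (hx : 0 < x) (a b : ℝ) (n : ℕ) :
    x ^ (a * n + b) = (x ^ a) ^ n * x ^ b := by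
  rw [Real.rpow_add hx, Real.rpow_mul hx.le, Real.rpow_natCast]

lemma rpow_mul_mlF_eq_tsum {α δ c t : ℝ} (ht : 0 < t) (β : ℝ) :
    t ^ β * mlF α δ (c * t ^ α) =
      ∑' j : ℕ, (j + 1) * c ^ j / Real.Gamma (α * j + δ) * t ^ (α * j + β) := by
  rw [mlF, ← tsum_mul_left]
  refine tsum_congr fun j => ?_
  rw [rpow_natCast_mul_add ht]
  ring

lemma summable_mlF_rpow {α δ t : ℝ} (hα0 : 0 < α) (hα1 : α < 1) (hδ : 0 < δ) (ht : 0 < t)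
    (β c : ℝ) :
    Summable fun j : ℕ => (j + 1) * c ^ j / Real.Gamma (α * j + δ) * t ^ (α * j + β) := by
  refine ((summable_mlF hα0 hα1 hδ (c * t ^ α)).mul_left (t ^ β)).congr fun j => ?_
  rw [rpow_natCast_mul_add ht]
  ring

lemma hasDerivAt_rpow_mul_mlF {α β t : ℝ} (hα0 : 0 < α) (hα1 : α < 1) (hβ : 0 < β) (ht : 0 < t)
    (c : ℝ) :
    HasDerivAt (fun s => s ^ β * mlF α (β + 1) (c * s ^ α))
      (∑' j : ℕ, (j + 1) * c ^ j / Real.Gamma (α * j + β) * t ^ (α * j + (β - 1))) t := by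
  have htmem : t ∈ Ioo (t / 2) (2 * t) := ⟨by linarith, by linarith⟩
  have hsum : Summable fun j : ℕ =>
      (t / 2) ^ (β - 1) * ((j + 1) * (|c| * (2 * t) ^ α) ^ j / Real.Gamma (α * j + β)) +
      (2 * t) ^ (β - 1) * ((j + 1) * (|c| * (2 * t) ^ α) ^ j / Real.Gamma (α * j + β)) :=
    ((summable_mlF hα0 hα1 hβ _).mul_left _).add ((summable_mlF hα0 hα1 hβ _).mul_left _)
  have h := hasDerivAt_tsum_of_isPreconnected
    (g := fun (j : ℕ) s => (j + 1) * c ^ j / Real.Gamma (α * j + (β + 1)) * s ^ (α * j + β))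
    (g' := fun (j : ℕ) s => (j + 1) * c ^ j / Real.Gamma (α * j + β) * s ^ (α * j + (β - 1)))
    hsum isOpen_Ioo isPreconnected_Ioo ?_ ?_ htmem
    (summable_mlF_rpow hα0 hα1 (by linarith) ht β c) htmem
  · refine h.congr_of_eventuallyEq ?_
    filter_upwards [lt_mem_nhds ht] with s hs
    exact rpow_mul_mlF_eq_tsum hs β
  · intro j y hy
    have hy0 : 0 < y := by linarith [hy.1]
    have hp : 0 < α * j + β := by positivity
    have hΓ := (Real.Gamma_pos_of_pos hp).ne'
    convert! (Real.hasDerivAt_rpow_const (p := α * j + β) (.inl hy0.ne')).const_mul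
      ((j + 1) * c ^ j / Real.Gamma (α * j + (β + 1))) using 1
    rw [← add_assoc, Real.Gamma_add_one hp.ne', ← add_sub_assoc]
    field_simp
  · intro j y hy
    have hy0 : 0 < y := by linarith [hy.1]
    have hp : 0 < α * j + β := by positivity
    have hΓ := Real.Gamma_pos_of_pos hp
    have hyβ : y ^ (β - 1) ≤ (t / 2) ^ (β - 1) + (2 * t) ^ (β - 1) := by
      rcases le_total 0 (β - 1) with hb | hb
      · have := Real.rpow_le_rpow hy0.le hy.2.le hb
        have : 0 < (t / 2) ^ (β - 1) := by positivity
        linarith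
      · have := Real.rpow_le_rpow_of_nonpos (by positivity) hy.1.le hb
        have : 0 < (2 * t) ^ (β - 1) := by positivity
        linarith
    have hyα : y ^ α ≤ (2 * t) ^ α := Real.rpow_le_rpow hy0.le hy.2.le hα0.le
    have hj : |(j : ℝ) + 1| = j + 1 := abs_of_pos (by positivity)
    rw [rpow_natCast_mul_add hy0]
    simp only [norm_div, norm_mul, norm_pow, Real.norm_eq_abs, abs_of_pos hΓ, hj,
      abs_of_pos (Real.rpow_pos_of_pos hy0 _)]
    calc (j + 1) * |c| ^ j / Real.Gamma (α * j + β) * ((y ^ α) ^ j * y ^ (β - 1))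
        ≤ (j + 1) * |c| ^ j / Real.Gamma (α * j + β) *
          (((2 * t) ^ α) ^ j * ((t / 2) ^ (β - 1) + (2 * t) ^ (β - 1))) := by gcongr
      _ = _ := by ring

lemma caputo_rpow_mul_mlF {α β t : ℝ} (hα0 : 0 < α) (hα1 : α < 1) (hβ : α ≤ β) (ht : 0 < t)
    (c : ℝ) :
    (1 / Real.Gamma (1 - α)) *
      (∫ z in (0 : ℝ)..t, deriv (fun s => s ^ β * mlF α (β + 1) (c * s ^ α)) z * (t - z) ^ (-α)) =
      t ^ (β - α) * mlF α (β - α + 1) (c * t ^ α) := by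
  have hβ0 : 0 < β := hα0.trans_le hβ
  have hv : 0 < 1 - α := by linarith
  have hΓα : 0 < Real.Gamma (1 - α) := Real.Gamma_pos_of_pos hv
  have hp (j : ℕ) : 0 < α * j + β := by positivity
  let d : ℝ → ℕ → ℝ := fun c j => (j + 1) * c ^ j / Real.Gamma (α * j + β)
  let F : ℕ → ℝ → ℝ := fun j z => d c j * (z ^ (α * j + β - 1) * (t - z) ^ (1 - α - 1))
  have hint (j : ℕ) : IntegrableOn (F j) (Ioc 0 t) :=
    ((intervalIntegrable_iff_integrableOn_Ioc_of_le ht.le).1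
      (Real.intervalIntegrable_rpow_mul_sub_rpow (hp j) hv ht)).const_mul _
  have hval (c : ℝ) (j : ℕ) :
      ∫ z in Ioc 0 t, d c j * (z ^ (α * j + β - 1) * (t - z) ^ (1 - α - 1)) =
        Real.Gamma (1 - α) *
          ((j + 1) * c ^ j / Real.Gamma (α * j + (β - α + 1)) * t ^ (α * j + (β - α))) := by
    have hΓ := (Real.Gamma_pos_of_pos (hp j)).ne'
    rw [integral_const_mul, ← intervalIntegral.integral_of_le ht.le,
      Real.integral_rpow_mul_sub_rpow (hp j) hv ht,
      show α * j + β + (1 - α) - 1 = α * j + (β - α) by ring,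
      show α * j + β + (1 - α) = α * j + (β - α + 1) by ring]
    simp only [d]
    field_simp
  have hnorm (j : ℕ) : ∫ z in Ioc 0 t, ‖F j z‖ = Real.Gamma (1 - α) *
      ((j + 1) * |c| ^ j / Real.Gamma (α * j + (β - α + 1)) * t ^ (α * j + (β - α))) := by
    rw [← hval]
    refine setIntegral_congr_fun measurableSet_Ioc fun z hz => ?_
    have hj : |(j : ℝ) + 1| = j + 1 := abs_of_pos (by positivity)
    simp only [F, d, norm_mul, norm_div, norm_pow, Real.norm_eq_abs, hj,
      abs_of_pos (Real.Gamma_pos_of_pos (hp j)), abs_of_nonneg (Real.rpow_nonneg hz.1.le _),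
      abs_of_nonneg (Real.rpow_nonneg (sub_nonneg.2 hz.2) _)]
  have hsum := hasSum_integral_of_summable_integral_norm hint (by
    simp only [hnorm]
    exact (summable_mlF_rpow hα0 hα1 (by linarith) ht _ _).mul_left _)
  have hcongr : ∫ z in (0 : ℝ)..t,
      deriv (fun s => s ^ β * mlF α (β + 1) (c * s ^ α)) z * (t - z) ^ (-α) =
      ∫ z in Ioc 0 t, ∑' j, F j z := by
    rw [intervalIntegral.integral_of_le ht.le]
    refine setIntegral_congr_fun measurableSet_Ioc fun z hz => ?_
    rw [(hasDerivAt_rpow_mul_mlF hα0 hα1 hβ0 hz.1 c).deriv, ← tsum_mul_right]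
    refine tsum_congr fun j => ?_
    simp only [F, d]
    rw [add_sub_assoc, show 1 - α - 1 = -α by ring]
    ring
  rw [hcongr, ← hsum.tsum_eq, tsum_congr (hval c), tsum_mul_left, ← rpow_mul_mlF_eq_tsum ht]
  field_simp

/-- For `0 < α < 1` and `μ ∈ ℝ`:
(i) `φ(t) = t^α F_{α,α+1}(-μ t^α)` satisfies `(D^α φ)(t) + μ φ(t) = E_{α,1}(-μ t^α)`;
(ii) `ψ(t) = t^{2α} F_{α,2α+1}(-μ t^α)` satisfies `(D^α ψ)(t) + μ ψ(t) = t^α E_{α,α+1}(-μ t^α)`,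
for every `t > 0`, where `D^α` is the Caputo derivative of order `α`. -/
theorem caputo_ode_for_mlF (α μ : ℝ) (hα0 : 0 < α) (hα1 : α < 1)
    (φ ψ : ℝ → ℝ)
    (hφ : ∀ t : ℝ, φ t = t ^ α * mlF α (α + 1) (-μ * t ^ α))
    (hψ : ∀ t : ℝ, ψ t = t ^ (2 * α) * mlF α (2 * α + 1) (-μ * t ^ α)) :
    ∀ t : ℝ, 0 < t →
      ((1 / Real.Gamma (1 - α)) * (∫ z in (0:ℝ)..t, deriv φ z * (t - z) ^ (-α)) + μ * φ t
          = mittagLeffler α 1 (-μ * t ^ α)) ∧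
      ((1 / Real.Gamma (1 - α)) * (∫ z in (0:ℝ)..t, deriv ψ z * (t - z) ^ (-α)) + μ * ψ t
          = t ^ α * mittagLeffler α (α + 1) (-μ * t ^ α)) := by
  have hφ' := funext hφ
  have hψ' := funext hψ
  intro t ht
  constructor
  · rw [hφ', caputo_rpow_mul_mlF hα0 hα1 le_rfl ht,
      ← mlF_sub_mul_mlF hα0 hα1 one_pos (-μ * t ^ α)]
    simp only [sub_self, Real.rpow_zero, zero_add]
    ring
  · rw [hψ', caputo_rpow_mul_mlF hα0 hα1 (by linarith) ht,
      ← mlF_sub_mul_mlF hα0 hα1 (by linarith) (-μ * t ^ α),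
      show 2 * α - α = α by ring, show α + (α + 1) = 2 * α + 1 by ring]
    simp only [two_mul, Real.rpow_add ht]
    ring
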